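/- Let α ≥ 4 be an even integer, let s_α > 0 be a minimizer of t ↦ Σ_{n∈ℤ} t·f_α(t n) over t > 0, and set F_α(x) = 1/(1 + s_α^α x^α). Then for every ξ with 0 ≤ ξ ≤ 1: (1 − ξ)·Σ_{n∈ℤ} F_α(n)·cos(2πnξ) − (1/(2π))·Σ_{n∈ℤ} F_α′(n)·sin(2πnξ) ≥ 0, where F_α′ denotes the derivative of F_α. (This expression equals the Fourier transform ψ̂_α(ξ) of the auxiliary function ψ_α constructed in the paper.) -/

import Mathlib

/-- The lattice energy `t ↦ Σ_{n∈ℤ} t·f_α(t n)` with `f_α(x) = 1/(1+x^α)`. -/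
noncomputable def latticeEnergy (α : ℕ) (t : ℝ) : ℝ :=
  ∑' n : ℤ, t * (1 / (1 + (t * (n : ℝ)) ^ α))

lemma summ_int (α : ℕ) (hα : Even α) (hα4 : 4 ≤ α) (t : ℝ) (ht : 0 < t) :
    Summable (fun n : ℤ => 1 / (1 + (t * (n : ℝ)) ^ α)) := by
  have h1 : Summable (fun n : ℤ => (1 / t ^ α) * (1 / (n : ℝ) ^ α)) :=
    (Real.summable_one_div_int_pow.mpr (by omega)).mul_left _
  refine Summable.of_norm_bounded_eventually h1 ?_
  have : {(0 : ℤ)}ᶜ ∈ (Filter.cofinite : Filter ℤ) := (Set.finite_singleton 0).compl_mem_cofinite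
  filter_upwards [this] with n hn
  have hn0 : (n : ℝ) ≠ 0 := by exact_mod_cast hn
  have h2 : 0 < (t * (n : ℝ)) ^ α := hα.pow_pos (by positivity)
  rw [Real.norm_of_nonneg (by positivity), div_mul_div_comm, one_mul, ← mul_pow]
  exact one_div_le_one_div_of_le h2 (by linarith)

lemma summ_nat (α : ℕ) (hα : Even α) (hα4 : 4 ≤ α) (t : ℝ) (ht : 0 < t) :
    Summable (fun n : ℕ => 1 / (1 + (t * ((n : ℝ) + 1)) ^ α)) := by
  have h := (summ_int α hα hα4 t ht).comp_injective (i := fun n : ℕ => (n : ℤ) + 1)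
    (fun a b h => by simpa using h)
  refine h.congr (fun n => ?_)
  simp

lemma energy_eq (α : ℕ) (hα : Even α) (hα4 : 4 ≤ α) (t : ℝ) (ht : 0 < t) :
    latticeEnergy α t = t * (1 + 2 * ∑' n : ℕ, 1 / (1 + (t * ((n : ℝ) + 1)) ^ α)) := by
  unfold latticeEnergy
  rw [tsum_mul_left, tsum_int_eq_zero_add_two_mul_tsum_pnat _ (summ_int α hα hα4 t ht),
    tsum_pnat_eq_tsum_succ (f := fun n : ℕ => 1 / (1 + (t * (((n : ℕ) : ℤ) : ℝ)) ^ α))]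
  · have : α ≠ 0 := by omega
    simp [this]
  · intro n
    simp [hα.neg_pow]

lemma energy_lower (α : ℕ) (hα : Even α) (hα4 : 4 ≤ α) (N : ℕ) (a b t : ℝ) (ha : 0 < a)
    (hat : a ≤ t) (htb : t ≤ b) :
    a * (1 + 2 * ∑ n ∈ Finset.range N, 1 / (1 + (b * ((n : ℝ) + 1)) ^ α)) ≤
      latticeEnergy α t := by
  have ht : 0 < t := by linarith
  have hb : 0 < b := by linarith
  rw [energy_eq α hα hα4 t ht]
  have h1 : ∑ n ∈ Finset.range N, 1 / (1 + (b * ((n : ℝ) + 1)) ^ α) ≤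
      ∑' n : ℕ, 1 / (1 + (t * ((n : ℝ) + 1)) ^ α) := by
    refine le_trans (Finset.sum_le_sum (fun n _ => ?_))
      ((summ_nat α hα hα4 t ht).sum_le_tsum (Finset.range N) (fun n _ => by positivity))
    gcongr
  have h0 : 0 ≤ ∑ n ∈ Finset.range N, 1 / (1 + (b * ((n : ℝ) + 1)) ^ α) :=
    Finset.sum_nonneg (fun n _ => by positivity)
  gcongr

lemma tsum_sq_tail : Summable (fun n : ℕ => (1 : ℝ) / ((n : ℝ) + 2) ^ 2) ∧
    ∑' n : ℕ, (1 : ℝ) / ((n : ℝ) + 2) ^ 2 ≤ 13 / 20 := by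
  have h := hasSum_zeta_two
  have h2 := (hasSum_nat_add_iff' 2).mpr h
  have h3 : HasSum (fun n : ℕ => (1 : ℝ) / ((n : ℝ) + 2) ^ 2) (Real.pi ^ 2 / 6 - 1) := by
    have e : (∑ i ∈ Finset.range 2, (1 : ℝ) / (i : ℝ) ^ 2) = 1 := by
      norm_num [Finset.sum_range_succ]
    rw [e] at h2
    have e2 : (fun n : ℕ => (1 : ℝ) / ((n : ℝ) + 2) ^ 2) =
        fun n : ℕ => (1 : ℝ) / ((n + 2 : ℕ) : ℝ) ^ 2 := by
      funext n; push_cast; rfl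
    rw [e2]; exact h2
  refine ⟨h3.summable, ?_⟩
  rw [h3.tsum_eq]
  have := Real.pi_lt_d4
  nlinarith [Real.pi_pos]

lemma energy_upper (α : ℕ) (hα : Even α) (hα4 : 4 ≤ α) (t : ℝ) (ht : 0 < t) :
    latticeEnergy α t ≤ t * (1 + 2 * (1 / (1 + t ^ α) + 13 / 20 / (2 ^ (α - 2) * t ^ α))) := by
  rw [energy_eq α hα hα4 t ht]
  obtain ⟨hs, hle⟩ := tsum_sq_tail
  have hsn := summ_nat α hα hα4 t ht
  rw [hsn.tsum_eq_zero_add]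
  have h1 : ∑' n : ℕ, 1 / (1 + (t * (((n + 1 : ℕ) : ℝ) + 1)) ^ α) ≤
      ∑' n : ℕ, (1 / (2 ^ (α - 2) * t ^ α)) * ((1 : ℝ) / ((n : ℝ) + 2) ^ 2) := by
    refine Summable.tsum_le_tsum (fun n => ?_) ((summable_nat_add_iff 1).mpr hsn)
      (hs.mul_left _)
    rw [div_mul_div_comm, one_mul]
    apply one_div_le_one_div_of_le (by positivity)
    have e : α = (α - 2) + 2 := by omega
    have h2 : (2 : ℝ) ^ (α - 2) * ((n : ℝ) + 2) ^ 2 ≤ ((n : ℝ) + 2) ^ α := by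
      conv_rhs => rw [e, pow_add]
      gcongr
      have : (0 : ℝ) ≤ n := by positivity
      linarith
    push_cast
    rw [mul_pow, show (n : ℝ) + 1 + 1 = n + 2 by ring]
    have h3 : 0 < t ^ α := by positivity
    nlinarith
  rw [tsum_mul_left] at h1
  have h4 : (1 / (2 ^ (α - 2) * t ^ α)) * ∑' n : ℕ, (1 : ℝ) / ((n : ℝ) + 2) ^ 2 ≤
      (1 / (2 ^ (α - 2) * t ^ α)) * (13 / 20) := by gcongr
  have h5 : 13 / 20 / (2 ^ (α - 2) * t ^ α) = (1 / (2 ^ (α - 2) * t ^ α)) * (13 / 20) := by ring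
  rw [h5]
  have h6 := h1.trans h4
  have : (1 : ℝ) / (1 + (t * (((0 : ℕ) : ℝ) + 1)) ^ α) = 1 / (1 + t ^ α) := by simp
  rw [this]
  gcongr

/-- The quartic case through the cotangent series. -/
lemma energy_four (t : ℝ) (ht : 0 < t) (ht1 : t ≤ 1) : 2.0995 ≤ latticeEnergy 4 t := by
  rw [energy_eq 4 (by decide) le_rfl t ht]
  set w : ℝ := 1 / (Real.sqrt 2 * t) with hw
  have h2 : Real.sqrt 2 ^ 2 = 2 := Real.sq_sqrt (by norm_num)
  have h2p : 0 < Real.sqrt 2 := by positivity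
  have hwp : 0 < w := by positivity
  have hwt : w * t = 1 / Real.sqrt 2 := by rw [hw]; field_simp
  have hw2 : 2 * w ^ 2 * t ^ 2 = 1 := by
    have : w ^ 2 * t ^ 2 = 1 / 2 := by rw [← mul_pow, hwt, div_pow, h2]; norm_num
    linarith
  set z : ℂ := (w : ℂ) * (1 + Complex.I) with hz
  have hzim : z.im = w := by simp [hz]
  have hzre : z.re = w := by simp [hz]
  have hzc : z ∈ Complex.integerComplement := by
    rw [Complex.mem_integerComplement_iff]
    rintro ⟨n, hn⟩
    have := congrArg Complex.im hn
    rw [hzim] at this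
    simp at this
    linarith
  have hz0 : z ≠ 0 := by
    intro h
    rw [h] at hzim
    simp at hzim; linarith
  have hrep := cot_series_rep' hzc
  have hsum := (summable_cotTerm hzc).hasSum
  have hterm : ∀ n : ℕ, z * (1 / (z - (n + 1)) + 1 / (z + (n + 1))) =
      2 / (1 + Complex.I * ((t : ℂ) ^ 2 * ((n : ℂ) + 1) ^ 2)) := by
    intro n
    have a1 : z - (n + 1) ≠ 0 := by
      intro h
      have := congrArg Complex.im h
      simp [hzim] at this; linarith
    have a2 : z + (n + 1) ≠ 0 := by
      intro h
      have := congrArg Complex.im h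
      simp [hzim] at this; linarith
    have a3 : (1 + Complex.I * ((t : ℂ) ^ 2 * ((n : ℂ) + 1) ^ 2)) ≠ 0 := by
      intro h
      have := congrArg Complex.re h
      rw [show Complex.I * ((t : ℂ) ^ 2 * ((n : ℂ) + 1) ^ 2) =
        Complex.I * ((t ^ 2 * ((n : ℝ) + 1) ^ 2 : ℝ) : ℂ) by push_cast; ring] at this
      generalize (t ^ 2 * ((n : ℝ) + 1) ^ 2) = r at this
      simp at this
    have a4 : z ^ 2 * (t : ℂ) ^ 2 = Complex.I := by
      have : (2 : ℂ) * w ^ 2 * t ^ 2 = 1 := by exact_mod_cast hw2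
      rw [hz, mul_pow, show (1 + Complex.I) ^ 2 = 2 * Complex.I by
        ring_nf; rw [Complex.I_sq]; ring]
      linear_combination Complex.I * this
    rw [one_div_add_one_div a1 a2, ← mul_div_assoc, div_eq_div_iff (mul_ne_zero a1 a2) a3]
    linear_combination (2 * Complex.I * ((n : ℂ) + 1) ^ 2) * a4 +
      2 * ((n : ℂ) + 1) ^ 2 * Complex.I_sq
  have hre : ∀ n : ℕ, (2 / (1 + Complex.I * ((t : ℂ) ^ 2 * ((n : ℂ) + 1) ^ 2))).re =
      2 * (1 / (1 + (t * ((n : ℝ) + 1)) ^ 4)) := by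
    intro n
    rw [show Complex.I * ((t : ℂ) ^ 2 * ((n : ℂ) + 1) ^ 2) =
        Complex.I * ((t ^ 2 * ((n : ℝ) + 1) ^ 2 : ℝ) : ℂ) by push_cast; ring,
      show (t * ((n : ℝ) + 1)) ^ 4 = (t ^ 2 * ((n : ℝ) + 1) ^ 2) ^ 2 by ring]
    generalize (t ^ 2 * ((n : ℝ) + 1) ^ 2) = r
    rw [Complex.div_re]
    simp [Complex.normSq_apply]
    have : 1 + r * r ≠ 0 := (by nlinarith [sq_nonneg r] : 0 < 1 + r * r).ne'
    have : 1 + r ^ 2 ≠ 0 := by positivity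
    field_simp
  have hs1 : HasSum (fun n : ℕ => z * (1 / (z - (n + 1)) + 1 / (z + (n + 1))))
      (z * (Real.pi * Complex.cot (Real.pi * z) - 1 / z)) := by
    rw [hrep]; exact hsum.mul_left z
  have hs2 := Complex.hasSum_re hs1
  simp_rw [hterm, hre] at hs2
  have key : 1 + 2 * ∑' n : ℕ, 1 / (1 + (t * ((n : ℝ) + 1)) ^ 4) =
      (z * (Real.pi * Complex.cot (Real.pi * z))).re := by
    rw [← tsum_mul_left, hs2.tsum_eq, mul_sub, mul_one_div_cancel hz0]
    simp
  rw [key]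
  set q : ℂ := Complex.exp (2 * Real.pi * Complex.I * z) with hq
  have hqn : ‖q‖ = Real.exp (-(2 * Real.pi * w)) := by
    rw [hq, Complex.norm_exp]
    congr 1
    simp [hzim, hzre]
  have hw' : 2 * Real.pi * w ≥ 4 := by
    have h14 : Real.sqrt 2 ≤ 1.415 := Real.sqrt_le_iff.mpr (by norm_num)
    have : 1 / Real.sqrt 2 ≥ 0.7 := by
      rw [ge_iff_le, le_div_iff₀ h2p]; nlinarith
    have hw1 : w ≥ 0.7 := by nlinarith
    nlinarith [Real.pi_gt_d2]
  have hqle : ‖q‖ ≤ 1 / 53 := by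
    rw [hqn, Real.exp_neg, ← one_div]
    apply one_div_le_one_div_of_le (by norm_num)
    calc (53 : ℝ) ≤ (2.7) ^ 4 := by norm_num
      _ ≤ (Real.exp 1) ^ 4 := by
        gcongr; linarith [Real.exp_one_gt_d9]
      _ = Real.exp 4 := by rw [← Real.exp_nat_mul]; norm_num
      _ ≤ _ := Real.exp_le_exp.mpr hw'
  have hq1 : 52 / 53 ≤ ‖1 - q‖ := by
    have := norm_sub_norm_le (1 : ℂ) q
    simp at this
    linarith
  have hq0 : 1 - q ≠ 0 := by
    intro h; rw [h] at hq1; norm_num at hq1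
  have hcot : z * (Real.pi * Complex.cot (Real.pi * z)) =
      Real.pi * w * (1 - Complex.I) + (-2 * Real.pi * Complex.I * z * (q / (1 - q))) := by
    rw [Complex.cot_pi_eq_exp_ratio, ← hq, hz]
    field_simp
    ring_nf
    simp only [Complex.I_sq, Complex.I_pow_three]
    ring
  have herr : ‖-2 * Real.pi * Complex.I * z * (q / (1 - q))‖ * t ≤ 2 * Real.pi / 52 := by
    have hzn : ‖z‖ * t = 1 := by
      have : (‖z‖ * t) ^ 2 = 1 := by
        rw [mul_pow, Complex.sq_norm, Complex.normSq_apply, hzre, hzim]; linarith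
      have h0 : 0 ≤ ‖z‖ * t := by positivity
      nlinarith
    have hqq : ‖q‖ / ‖1 - q‖ ≤ 1 / 52 := by
      rw [div_le_div_iff₀ (by linarith) (by norm_num)]; linarith
    rw [norm_mul, norm_mul, norm_div]
    have : ‖-2 * (Real.pi : ℂ) * Complex.I‖ = 2 * Real.pi := by
      simp [abs_of_pos Real.pi_pos]
    rw [this]
    calc 2 * Real.pi * ‖z‖ * (‖q‖ / ‖1 - q‖) * t = 2 * Real.pi * (‖q‖ / ‖1 - q‖) * (‖z‖ * t) := by ring
      _ = 2 * Real.pi * (‖q‖ / ‖1 - q‖) := by rw [hzn, mul_one]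
      _ ≤ 2 * Real.pi * (1 / 52) := by gcongr
      _ = _ := by ring
  rw [hcot, Complex.add_re]
  have hmain : ((Real.pi : ℂ) * w * (1 - Complex.I)).re = Real.pi * w := by
    rw [← Complex.ofReal_mul, Complex.re_ofReal_mul]; simp
  rw [hmain]
  set e := -2 * Real.pi * Complex.I * z * (q / (1 - q)) with he
  have he1 : -‖e‖ ≤ e.re := by
    have := Complex.abs_re_le_norm e
    linarith [neg_abs_le e.re]
  have h14 : Real.sqrt 2 ≤ 1.41422 := Real.sqrt_le_iff.mpr (by norm_num)
  have hs : 1 / Real.sqrt 2 ≥ 0.7071 := by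
    rw [ge_iff_le, le_div_iff₀ h2p]; nlinarith
  have hfin : t * (Real.pi * w + e.re) ≥ Real.pi * (1 / Real.sqrt 2) - 2 * Real.pi / 52 := by
    rw [← hwt]
    nlinarith
  nlinarith [Real.pi_gt_d4]
lemma cusa (x : ℝ) (hx : 0 ≤ x) : x * (1 - Real.cos x) ≤ 3 * (x - Real.sin x) := by
  rcases le_or_gt 3 x with h3 | h3
  · have h1 := Real.neg_one_le_cos x
    have h2 := Real.sin_le_one x
    nlinarith
  · have hd : ∀ y : ℝ, HasDerivAt (fun y => 2 * y + y * Real.cos y - 3 * Real.sin y)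
        (2 * 1 + (1 * Real.cos y + y * (-Real.sin y)) - 3 * Real.cos y) y := fun y =>
      (((hasDerivAt_id y).const_mul 2).add ((hasDerivAt_id y).mul (Real.hasDerivAt_cos y))).sub
        ((Real.hasDerivAt_sin y).const_mul 3)
    have hm : MonotoneOn (fun y => 2 * y + y * Real.cos y - 3 * Real.sin y) (Set.Icc 0 3) := by
      apply monotoneOn_of_deriv_nonneg (convex_Icc 0 3)
      · exact fun y _ => (hd y).continuousAt.continuousWithinAt
      · exact fun y _ => (hd y).differentiableAt.differentiableWithinAt
      · intro y hy
        rw [interior_Icc] at hy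
        rw [(hd y).deriv]
        have hy0 : 0 < y / 2 := by linarith [hy.1]
        have hy1 : y / 2 < Real.pi / 2 := by linarith [hy.2, Real.pi_gt_three]
        have hc : 0 < Real.cos (y / 2) := Real.cos_pos_of_mem_Ioo ⟨by linarith, hy1⟩
        have hs : 0 < Real.sin (y / 2) := Real.sin_pos_of_pos_of_lt_pi hy0 (by linarith)
        have ht := Real.lt_tan hy0 hy1
        rw [Real.tan_eq_sin_div_cos, lt_div_iff₀ hc] at ht
        have e1 : Real.cos y = 1 - 2 * Real.sin (y / 2) ^ 2 := by
          have h := Real.cos_two_mul (y / 2)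
          have h' := Real.sin_sq_add_cos_sq (y / 2)
          rw [show 2 * (y / 2) = y by ring] at h
          linarith
        have e2 : Real.sin y = 2 * Real.sin (y / 2) * Real.cos (y / 2) := by
          have h := Real.sin_two_mul (y / 2)
          rwa [show 2 * (y / 2) = y by ring] at h
        rw [e1, e2]
        nlinarith [mul_pos hs (sub_pos.mpr ht)]
    have := hm ⟨le_rfl, by norm_num⟩ ⟨hx, h3.le⟩ hx
    simp at this
    linarith

/-- `H_β(x) = x / (1 + x^β)^{1/β}`, a primitive of a minorant of `1/(1+x^{β+1})`. -/
lemma step_bound (β : ℕ) (hβ : 1 ≤ β) (x y : ℝ) (hx : 0 ≤ x) (hxy : x ≤ y) :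
    y * (1 + y ^ β) ^ (-(1 / (β : ℝ))) - x * (1 + x ^ β) ^ (-(1 / (β : ℝ))) ≤
      1 / (1 + x ^ (β + 1)) * (y - x) := by
  have hβ0 : (0 : ℝ) < β := by exact_mod_cast hβ
  have hd : ∀ z : ℝ, 0 ≤ z → HasDerivAt (fun z : ℝ => z * (1 + z ^ β) ^ (-(1 / (β : ℝ))))
      ((1 + z ^ β) ^ (-(1 / (β : ℝ)) - 1)) z := by
    intro z hz
    have hp : 0 < 1 + z ^ β := by positivity
    have h1 : HasDerivAt (fun z : ℝ => 1 + z ^ β) ((β : ℝ) * z ^ (β - 1)) z :=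
      (hasDerivAt_pow β z).const_add 1
    have h2 := (hasDerivAt_id z).mul (h1.rpow_const (p := -(1 / (β : ℝ))) (Or.inl hp.ne'))
    refine h2.congr_deriv ?_
    have e1 : (1 + z ^ β) ^ (-(1 / (β : ℝ))) = (1 + z ^ β) ^ (-(1 / (β : ℝ)) - 1) * (1 + z ^ β) := by
      rw [Real.rpow_sub_one hp.ne']; field_simp
    have e2 : z ^ β = z * z ^ (β - 1) := by
      rw [← pow_succ']; congr 1; omega
    have e3 : (β : ℝ) * z ^ (β - 1) * -(1 / (β : ℝ)) = - z ^ (β - 1) := by field_simp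
    simp only [id, one_mul]
    rw [e3, e1]
    linear_combination (1 + z ^ β) ^ (-(1 / (β : ℝ)) - 1) * e2
  refine Convex.image_sub_le_mul_sub_of_deriv_le (convex_Icc x y)
      (f := fun z : ℝ => z * (1 + z ^ β) ^ (-(1 / (β : ℝ)))) ?_ ?_ ?_ x ⟨le_rfl, hxy⟩ y
      ⟨hxy, le_rfl⟩ hxy
  · exact fun z hz => (hd z (hx.trans hz.1)).continuousAt.continuousWithinAt
  · intro z hz
    rw [interior_Icc] at hz
    exact (hd z (hx.trans hz.1.le)).differentiableAt.differentiableWithinAt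
  · intro z hz
    rw [interior_Icc] at hz
    have hz0 : 0 ≤ z := hx.trans hz.1.le
    rw [(hd z hz0).deriv]
    have hp : 1 ≤ 1 + z ^ β := by
      have : 0 ≤ z ^ β := by positivity
      linarith
    have hp0 : 0 < 1 + z ^ β := by linarith
    rw [show -(1 / (β : ℝ)) - 1 = -(1 / (β : ℝ) + 1) by ring, Real.rpow_neg hp0.le, ← one_div]
    apply one_div_le_one_div_of_le (by positivity)
    rw [Real.rpow_add_one hp0.ne']
    have m1 : 1 ≤ (1 + z ^ β) ^ (1 / (β : ℝ)) := Real.one_le_rpow hp (by positivity)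
    have m2 : z ≤ (1 + z ^ β) ^ (1 / (β : ℝ)) := by
      calc z = (z ^ β) ^ (1 / (β : ℝ)) := by
            rw [one_div, Real.pow_rpow_inv_natCast hz0 (by omega)]
        _ ≤ _ := by gcongr; linarith
    have hxz : x ^ (β + 1) ≤ z ^ (β + 1) := by gcongr; exact hz.1.le
    have hzb : 0 ≤ z ^ β := by positivity
    have e : z ^ (β + 1) = z ^ β * z := pow_succ z β
    nlinarith

lemma energy_small (α : ℕ) (hα : Even α) (hα4 : 4 ≤ α) (t : ℝ) (ht : 0 < t) :
    2 - t ≤ latticeEnergy α t := by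
  rw [energy_eq α hα hα4 t ht]
  set S := ∑' n : ℕ, 1 / (1 + (t * ((n : ℝ) + 1)) ^ α) with hS
  obtain ⟨β, rfl⟩ : ∃ β, α = β + 1 := ⟨α - 1, by omega⟩
  have hβ : 1 ≤ β := by omega
  have key : ∀ N : ℕ, (N : ℝ) * t / ((N : ℝ) * t + 1) ≤ t + t * S := by
    intro N
    set H : ℝ → ℝ := fun x => x * (1 + x ^ β) ^ (-(1 / (β : ℝ))) with hH
    have h1 : H (N * t) ≤ ∑ n ∈ Finset.range N, t * (1 / (1 + (t * (n : ℝ)) ^ (β + 1))) := by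
      have h := Finset.sum_range_sub (fun n : ℕ => H (n * t)) N
      have h0 : H (((0 : ℕ) : ℝ) * t) = 0 := by simp [hH]
      rw [h0, sub_zero] at h
      rw [← h]
      refine Finset.sum_le_sum (fun n _ => ?_)
      have := step_bound β hβ ((n : ℝ) * t) (((n + 1 : ℕ) : ℝ) * t) (by positivity)
        (by gcongr; simp)
      refine this.trans (le_of_eq ?_)
      push_cast
      ring
    have h2 : ∑ n ∈ Finset.range N, t * (1 / (1 + (t * (n : ℝ)) ^ (β + 1))) ≤ t + t * S := by
      calc _ ≤ ∑ n ∈ Finset.range (N + 1), t * (1 / (1 + (t * (n : ℝ)) ^ (β + 1))) := by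
            rw [Finset.sum_range_succ]
            have : 0 ≤ t * (1 / (1 + (t * (N : ℝ)) ^ (β + 1))) := by positivity
            linarith
        _ = (∑ n ∈ Finset.range N, t * (1 / (1 + (t * ((n : ℝ) + 1)) ^ (β + 1)))) + t := by
            rw [Finset.sum_range_succ']
            simp
        _ ≤ _ := by
            rw [← Finset.mul_sum]
            have := (summ_nat (β + 1) hα hα4 t ht).sum_le_tsum (Finset.range N)
              (fun n _ => by positivity)
            nlinarith
    refine le_trans ?_ (h1.trans h2)
    have hx : 0 ≤ (N : ℝ) * t := by positivity
    generalize (N : ℝ) * t = x at hx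
    simp only [hH]
    rw [div_eq_mul_inv]
    refine mul_le_mul_of_nonneg_left ?_ hx
    have hle : 1 + x ^ β ≤ (x + 1) ^ β := by
      have := pow_add_pow_le hx (zero_le_one' ℝ) (n := β) (by omega)
      rw [one_pow] at this
      linarith
    have e : (x + 1)⁻¹ = ((x + 1) ^ β) ^ (-(1 / (β : ℝ))) := by
      rw [Real.rpow_neg (by positivity), one_div,
        Real.pow_rpow_inv_natCast (by positivity) (by omega)]
    rw [e]
    exact Real.rpow_le_rpow_of_nonpos (by positivity) hle (by
      rw [Left.neg_nonpos_iff]; positivity)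
  have hlim : 1 ≤ t + t * S := by
    by_contra hcon
    push Not at hcon
    set d := t + t * S with hd
    obtain ⟨N, hN⟩ := exists_nat_gt (1 / ((1 - d) * t))
    have h := key N
    have hd1 : 0 < 1 - d := by linarith
    rw [div_lt_iff₀ (by positivity)] at hN
    rw [div_le_iff₀ (by positivity)] at h
    have hNt : 0 ≤ (N : ℝ) * t := by positivity
    nlinarith
  linarith

lemma one_lt_minimizer (α : ℕ) (hα : Even α) (hα4 : 4 ≤ α) (s : ℝ) (hs : 0 < s)
    (hmin : ∀ t : ℝ, 0 < t → latticeEnergy α s ≤ latticeEnergy α t) : 1 < s := by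
  by_contra hcon
  push Not at hcon
  have hsmall := energy_small α hα hα4 s hs
  have hlow := fun (N : ℕ) (a b : ℝ) (ha : 0 < a) (h1 : a ≤ s) (h2 : s ≤ b) =>
    energy_lower α hα hα4 N a b s ha h1 h2
  have hcases : α = 4 ∨ α = 6 ∨ α = 8 ∨ 10 ≤ α := by
    obtain ⟨k, rfl⟩ := hα
    omega
  rcases hcases with rfl | rfl | rfl | h10
  · have h1 := energy_four s hs hcon
    have h2 := energy_upper 4 hα hα4 (3 / 2) (by norm_num)
    have h3 := hmin (3 / 2) (by norm_num)
    norm_num at h1 h2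
    linarith
  · have h2 := energy_upper 6 hα hα4 (3 / 2) (by norm_num)
    have h3 := hmin (3 / 2) (by norm_num)
    have h4 : latticeEnergy 6 s < 1.755 := by
      norm_num at h2 ⊢
      linarith
    have aux : ∀ (N : ℕ) (a b : ℝ), 0 < a → s ≤ b →
        1.755 ≤ a * (1 + 2 * ∑ n ∈ Finset.range N, 1 / (1 + (b * ((n : ℝ) + 1)) ^ 6)) → s < a := by
      intro N a b ha hb h
      by_contra hc
      push Not at hc
      linarith [hlow N a b ha hc hb]
    have i1 := aux 1 0.9 1 (by norm_num) hcon (by norm_num [Finset.sum_range_succ])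
    have i2 := aux 2 0.75 _ (by norm_num) i1.le (by norm_num [Finset.sum_range_succ])
    have i3 := aux 2 0.65 _ (by norm_num) i2.le (by norm_num [Finset.sum_range_succ])
    have i4 := aux 2 0.56 _ (by norm_num) i3.le (by norm_num [Finset.sum_range_succ])
    have i5 := aux 2 0.5 _ (by norm_num) i4.le (by norm_num [Finset.sum_range_succ])
    have i6 := aux 3 0.44 _ (by norm_num) i5.le (by norm_num [Finset.sum_range_succ])
    have i7 := aux 3 0.38 _ (by norm_num) i6.le (by norm_num [Finset.sum_range_succ])
    have i8 := aux 3 0.34 _ (by norm_num) i7.le (by norm_num [Finset.sum_range_succ])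
    have i9 := aux 4 0.3 _ (by norm_num) i8.le (by norm_num [Finset.sum_range_succ])
    have i10 := aux 4 0.27 _ (by norm_num) i9.le (by norm_num [Finset.sum_range_succ])
    have i11 := aux 5 0.24 _ (by norm_num) i10.le (by norm_num [Finset.sum_range_succ])
    linarith
  · have h2 := energy_upper 8 hα hα4 (4 / 3) (by norm_num)
    have h3 := hmin (4 / 3) (by norm_num)
    have h4 : latticeEnergy 8 s < 1.58 := by
      norm_num at h2 ⊢
      linarith
    have aux : ∀ (N : ℕ) (a b : ℝ), 0 < a → s ≤ b →
        1.58 ≤ a * (1 + 2 * ∑ n ∈ Finset.range N, 1 / (1 + (b * ((n : ℝ) + 1)) ^ 8)) → s < a := by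
      intro N a b ha hb h
      by_contra hc
      push Not at hc
      linarith [hlow N a b ha hc hb]
    have i1 := aux 1 0.8 1 (by norm_num) hcon (by norm_num [Finset.sum_range_succ])
    have i2 := aux 2 0.65 _ (by norm_num) i1.le (by norm_num [Finset.sum_range_succ])
    have i3 := aux 2 0.55 _ (by norm_num) i2.le (by norm_num [Finset.sum_range_succ])
    have i4 := aux 2 0.5 _ (by norm_num) i3.le (by norm_num [Finset.sum_range_succ])
    have i5 := aux 2 0.42 _ (by norm_num) i4.le (by norm_num [Finset.sum_range_succ])
    linarith
  · have h2 := energy_upper α hα hα4 (4 / 3) (by norm_num)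
    have h3 := hmin (4 / 3) (by norm_num)
    have h4 : latticeEnergy α s < 1.49 := by
      have p1 : ((4 : ℝ) / 3) ^ 10 ≤ (4 / 3) ^ α := pow_le_pow_right₀ (by norm_num) h10
      have p2 : (2 : ℝ) ^ 8 ≤ 2 ^ (α - 2) := pow_le_pow_right₀ (by norm_num) (by omega)
      have p3 : (4 / 3 : ℝ) * (1 + 2 * (1 / (1 + (4 / 3) ^ α) +
          13 / 20 / (2 ^ (α - 2) * (4 / 3) ^ α))) ≤ (4 / 3 : ℝ) * (1 + 2 * (1 / (1 + (4 / 3) ^ 10) +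
          13 / 20 / (2 ^ 8 * (4 / 3) ^ 10))) := by
        gcongr
      have p4 : (4 / 3 : ℝ) * (1 + 2 * (1 / (1 + (4 / 3) ^ 10) +
          13 / 20 / (2 ^ 8 * (4 / 3) ^ 10))) < 1.49 := by norm_num
      linarith
    have aux : ∀ (a b : ℝ), 0 < a → s ≤ b → b ≤ 1 →
        1.49 ≤ a * (1 + 2 * (1 / (1 + b ^ 10))) → s < a := by
      intro a b ha hb hb1 h
      by_contra hc
      push Not at hc
      have h5 := hlow 1 a b ha hc hb
      simp only [Finset.sum_range_one, Nat.cast_zero, zero_add, mul_one] at h5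
      have hb0 : 0 ≤ b := by linarith
      have h6 : b ^ α ≤ b ^ 10 := pow_le_pow_of_le_one hb0 hb1 h10
      have h7 : a * (1 + 2 * (1 / (1 + b ^ 10))) ≤ a * (1 + 2 * (1 / (1 + b ^ α))) := by
        gcongr
      linarith
    have i1 := aux 0.75 1 (by norm_num) hcon le_rfl (by norm_num)
    have i2 := aux 0.6 _ (by norm_num) i1.le (by norm_num) (by norm_num)
    have i3 := aux 0.5 _ (by norm_num) i2.le (by norm_num) (by norm_num)
    linarith

/-- The `n`-th term of the derivative of the lattice energy. -/
noncomputable def dTerm (α : ℕ) (n : ℤ) (t : ℝ) : ℝ :=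
  1 / (1 + (t * (n : ℝ)) ^ α) * (1 - α * (1 - 1 / (1 + (t * (n : ℝ)) ^ α)))

lemma dTerm_bound (α : ℕ) (hα : Even α) (hα4 : 4 ≤ α) (n : ℤ) (a t : ℝ) (ha : 0 < a)
    (hat : a ≤ t) : ‖dTerm α n t‖ ≤ α * (1 / (1 + (a * (n : ℝ)) ^ α)) := by
  have hp : 0 ≤ (a * (n : ℝ)) ^ α := hα.pow_nonneg _
  have hle : (a * (n : ℝ)) ^ α ≤ (t * (n : ℝ)) ^ α := by
    rw [← hα.pow_abs (a * (n : ℝ)), ← hα.pow_abs (t * (n : ℝ)), abs_mul, abs_mul,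
      abs_of_pos ha, abs_of_pos (ha.trans_le hat)]
    gcongr
  have hf : 1 / (1 + (t * (n : ℝ)) ^ α) ≤ 1 / (1 + (a * (n : ℝ)) ^ α) :=
    one_div_le_one_div_of_le (by linarith) (by linarith)
  have hf0 : 0 ≤ 1 / (1 + (t * (n : ℝ)) ^ α) := by
    have := hp.trans hle
    positivity
  have hf1 : 1 / (1 + (t * (n : ℝ)) ^ α) ≤ 1 := by
    rw [div_le_one (by linarith)]; linarith
  have hα' : (4 : ℝ) ≤ α := by exact_mod_cast hα4
  unfold dTerm
  generalize 1 / (1 + (t * (n : ℝ)) ^ α) = f at *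
  generalize 1 / (1 + (a * (n : ℝ)) ^ α) = g at *
  rw [norm_mul, Real.norm_of_nonneg hf0, mul_comm]
  have : ‖1 - α * (1 - f)‖ ≤ α := by
    rw [Real.norm_eq_abs, abs_le]; constructor <;> nlinarith
  gcongr

lemma dTerm_summable (α : ℕ) (hα : Even α) (hα4 : 4 ≤ α) (s : ℝ) (hs : 0 < s) :
    Summable (fun n : ℤ => dTerm α n s) :=
  Summable.of_norm_bounded ((summ_int α hα hα4 s hs).mul_left (α : ℝ))
    (fun n => dTerm_bound α hα hα4 n s s hs le_rfl)

lemma critical (α : ℕ) (hα : Even α) (hα4 : 4 ≤ α) (s : ℝ) (hs : 0 < s)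
    (hmin : ∀ t : ℝ, 0 < t → latticeEnergy α s ≤ latticeEnergy α t) :
    ∑' n : ℤ, dTerm α n s = 0 := by
  have hd : HasDerivAt (latticeEnergy α) (∑' n : ℤ, dTerm α n s) s := by
    refine hasDerivAt_tsum_of_isPreconnected (t := Set.Ioi (s / 2)) (y₀ := s)
      (g := fun (n : ℤ) (t : ℝ) => t * (1 / (1 + (t * (n : ℝ)) ^ α)))
      (g' := fun n t => dTerm α n t)
      ((summ_int α hα hα4 (s / 2) (by positivity)).mul_left (α : ℝ)) isOpen_Ioi
      isPreconnected_Ioi ?_ ?_ ?_ ?_ ?_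
    · intro n y hy
      have hp : 0 < 1 + (y * (n : ℝ)) ^ α := by
        have : 0 ≤ (y * (n : ℝ)) ^ α := hα.pow_nonneg _
        linarith
      have h1 : HasDerivAt (fun t : ℝ => t * (n : ℝ)) (n : ℝ) y := by
        simpa using (hasDerivAt_id y).mul_const (n : ℝ)
      have h2 := (h1.pow α).const_add 1
      have h3 := (hasDerivAt_id y).mul (h2.inv hp.ne')
      have e0 : (fun t : ℝ => t * (1 / (1 + (t * (n : ℝ)) ^ α))) =
          id * (fun x : ℝ => 1 + ((fun t : ℝ => t * (n : ℝ)) ^ α) x)⁻¹ := by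
        funext t; simp
      rw [e0]
      refine h3.congr_deriv ?_
      unfold dTerm
      have e : (y * (n : ℝ)) ^ α = (y * (n : ℝ)) ^ (α - 1) * (y * n) := by
        rw [← pow_succ]; congr 1; omega
      simp only [id, Pi.pow_apply, Pi.inv_apply]
      rw [e] at hp ⊢
      generalize (y * (n : ℝ)) ^ (α - 1) = P at hp ⊢
      have hp' := hp.ne'
      obtain ⟨D, hD⟩ : ∃ D, D = 1 + P * (y * (n : ℝ)) := ⟨_, rfl⟩
      rw [← hD] at hp' ⊢
      field_simp
      rw [hD]
      ring
    · intro n y hy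
      exact dTerm_bound α hα hα4 n (s / 2) y (by positivity) (le_of_lt hy)
    · exact Set.mem_Ioi.mpr (by linarith)
    · exact (summ_int α hα hα4 s hs).mul_left s
    · exact Set.mem_Ioi.mpr (by linarith)
  refine IsLocalMin.hasDerivAt_eq_zero ?_ hd
  filter_upwards [Ioi_mem_nhds hs] with t ht
  exact hmin t ht

lemma first_value (α : ℕ) (hα : Even α) (hα4 : 4 ≤ α) (s : ℝ) (hs : 0 < s)
    (hmin : ∀ t : ℝ, 0 < t → latticeEnergy α s ≤ latticeEnergy α t) :
    3 ≤ α * (1 - 1 / (1 + s ^ α)) := by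
  have h1 := one_lt_minimizer α hα hα4 s hs hmin
  have hsα : 1 ≤ s ^ α := one_le_pow₀ h1.le
  have hp : 1 / (1 + s ^ α) ≤ 1 / 2 := one_div_le_one_div_of_le (by norm_num) (by linarith)
  by_cases h6 : 6 ≤ α
  · have : (6 : ℝ) ≤ α := by exact_mod_cast h6
    nlinarith
  · have : α = 4 := by
      obtain ⟨k, rfl⟩ := hα
      omega
    subst this
    have hc := critical 4 hα hα4 s hs hmin
    have hsum := (dTerm_summable 4 hα hα4 s hs).neg
    have hle := hsum.sum_le_tsum {0, 1, -1} (fun n hn => by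
      simp only [Finset.mem_insert, Finset.mem_singleton, not_or] at hn
      have hn1 : (1 : ℝ) ≤ (n : ℝ) ^ 4 := by
        have h0 := hn.1
        have : (1 : ℤ) ≤ n ^ 4 := by
          have := hα.pow_pos h0
          omega
        exact_mod_cast this
      have hx : 1 ≤ (s * (n : ℝ)) ^ 4 := by
        rw [mul_pow]; nlinarith
      have hf : 1 / (1 + (s * (n : ℝ)) ^ 4) ≤ 1 / 2 :=
        one_div_le_one_div_of_le (by norm_num) (by linarith)
      have hf0 : 0 ≤ 1 / (1 + (s * (n : ℝ)) ^ 4) := by positivity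
      unfold dTerm
      generalize 1 / (1 + (s * (n : ℝ)) ^ 4) = f at *
      push_cast
      nlinarith)
    rw [tsum_neg, hc, neg_zero, Finset.sum_insert (by decide), Finset.sum_insert (by decide),
      Finset.sum_singleton] at hle
    have e0 : dTerm 4 0 s = 1 := by simp [dTerm]
    have e1 : dTerm 4 1 s = 1 / (1 + s ^ 4) * (1 - 4 * (1 - 1 / (1 + s ^ 4))) := by simp [dTerm]
    have e2 : dTerm 4 (-1) s = 1 / (1 + s ^ 4) * (1 - 4 * (1 - 1 / (1 + s ^ 4))) := by
      simp [dTerm, hα.neg_pow]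
    rw [e0, e1, e2] at hle
    have hp2 : 1 / (1 + s ^ 4) < 1 / 2 := by
      have : 1 < s ^ 4 := one_lt_pow₀ h1 (by norm_num)
      exact one_div_lt_one_div_of_lt (by norm_num) (by linarith)
    generalize 1 / (1 + s ^ 4) = p at *
    push_cast
    by_contra hcon
    push Not at hcon
    nlinarith

lemma term_nonneg (K f m φ : ℝ) (hf : 0 ≤ f) (hK : 3 ≤ K) (hm : m ≠ 0) (θ : ℝ) (hθ : 0 ≤ θ)
    (hφ : φ = m * θ) :
    0 ≤ -(θ * f * (1 - Real.cos φ)) + (-(K * f) / m) * (Real.sin φ - φ) := by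
  have pos : ∀ m : ℝ, 0 < m →
      0 ≤ -(θ * f * (1 - Real.cos (m * θ))) + (-(K * f) / m) * (Real.sin (m * θ) - m * θ) := by
    intro m hm
    have h0 : 0 ≤ m * θ := by positivity
    have h1 := cusa _ h0
    have h2 := Real.sin_le h0
    have h3 : m * θ * (1 - Real.cos (m * θ)) ≤ K * (m * θ - Real.sin (m * θ)) := by nlinarith
    have e : -(θ * f * (1 - Real.cos (m * θ))) + (-(K * f) / m) * (Real.sin (m * θ) - m * θ) =
        f * (K * (m * θ - Real.sin (m * θ)) - m * θ * (1 - Real.cos (m * θ))) / m := by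
      field_simp
      ring
    rw [e]
    exact div_nonneg (mul_nonneg hf (by linarith)) hm.le
  subst hφ
  rcases lt_or_gt_of_ne hm with h | h
  · have := pos (-m) (by linarith)
    rw [neg_mul, Real.cos_neg, Real.sin_neg] at this
    refine this.trans (le_of_eq ?_)
    rw [div_neg]
    ring
  · exact pos m h

/-- For `α ≥ 4` and `0 ≤ ξ ≤ 1`,
`(1 − ξ)·Σ_{n∈ℤ} F_α(n)cos(2πnξ) − (1/(2π))·Σ_{n∈ℤ} F_α′(n)sin(2πnξ) ≥ 0`. -/
theorem statement19 (α : ℕ) (hα : Even α) (hα4 : 4 ≤ α) (s : ℝ) (hs : 0 < s)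
    (hmin : ∀ t : ℝ, 0 < t → latticeEnergy α s ≤ latticeEnergy α t)
    (F : ℝ → ℝ) (hF : ∀ x, F x = 1 / (1 + s ^ α * x ^ α)) :
    ∀ ξ : ℝ, 0 ≤ ξ → ξ ≤ 1 →
      0 ≤ (1 - ξ) * (∑' n : ℤ, F n * Real.cos (2 * Real.pi * n * ξ))
          - (1 / (2 * Real.pi)) * ∑' n : ℤ, deriv F n * Real.sin (2 * Real.pi * n * ξ) := by
  intro ξ hξ0 hξ1
  have hcrit := critical α hα hα4 s hs hmin
  have hfirst := first_value α hα hα4 s hs hmin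
  have hs1 := one_lt_minimizer α hα hα4 s hs hmin
  have hα' : (4 : ℝ) ≤ α := by exact_mod_cast hα4
  have hden : ∀ x : ℝ, 0 < 1 + s ^ α * x ^ α := fun x => by
    have : 0 ≤ x ^ α := hα.pow_nonneg _
    positivity
  have hFpos : ∀ x, 0 ≤ F x := fun x => by
    rw [hF]; exact (one_div_pos.mpr (hden x)).le
  have hF1 : ∀ x, F x ≤ 1 := fun x => by
    rw [hF, div_le_one (hden x)]
    have : 0 ≤ x ^ α := hα.pow_nonneg _
    have : 0 ≤ s ^ α * x ^ α := by positivity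
    linarith
  have hderiv : ∀ x, deriv F x = -(s ^ α * (α * x ^ (α - 1))) / (1 + s ^ α * x ^ α) ^ 2 := by
    intro x
    have e : F = (fun x => 1 + s ^ α * x ^ α)⁻¹ := by
      funext x; rw [hF]; simp
    rw [e]
    exact ((((hasDerivAt_pow α x).const_mul (s ^ α)).const_add 1).inv (hden x).ne').deriv
  have hxd : ∀ x : ℝ, x * deriv F x = -(α * (1 - F x) * F x) := by
    intro x
    have h := (hden x).ne'
    have e : x ^ α = x ^ (α - 1) * x := by rw [← pow_succ]; congr 1; omega
    rw [hderiv, hF]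
    rw [e] at h ⊢
    generalize x ^ (α - 1) = P at h ⊢
    generalize s ^ α = c at h ⊢
    obtain ⟨D, hD⟩ : ∃ D, D = 1 + c * (P * x) := ⟨_, rfl⟩
    rw [← hD] at h ⊢
    field_simp
    rw [hD]
    ring
  have hd0 : deriv F 0 = 0 := by
    rw [hderiv, zero_pow (by omega)]; simp
  have hFs : Summable (fun n : ℤ => F n) := by
    refine (summ_int α hα hα4 s hs).congr (fun n => ?_)
    rw [hF, mul_pow]
  have hdT : ∀ n : ℤ, dTerm α n s = F n + n * deriv F n := by
    intro n
    rw [hxd, hF, dTerm, mul_pow]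
    ring
  have hdb : ∀ n : ℤ, |deriv F n| ≤ α * F n := by
    intro n
    by_cases hn : n = 0
    · subst hn
      rw [Int.cast_zero, hd0, abs_zero]
      exact mul_nonneg (by linarith) (hFpos _)
    · have hn1 : (1 : ℝ) ≤ |(n : ℝ)| := by exact_mod_cast Int.one_le_abs hn
      have h1 : |(n : ℝ) * deriv F n| ≤ α * F n := by
        rw [hxd, abs_neg, abs_of_nonneg]
        · have := hFpos n
          have := hF1 n
          nlinarith [mul_nonneg (by linarith : (0 : ℝ) ≤ α) (mul_nonneg (hFpos n) (hFpos n))]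
        · exact mul_nonneg (mul_nonneg (by linarith) (by linarith [hF1 n])) (hFpos n)
      rw [abs_mul] at h1
      nlinarith [abs_nonneg (deriv F n)]
  have hcs : Summable (fun n : ℤ => F n * Real.cos (2 * Real.pi * n * ξ)) := by
    refine Summable.of_norm_bounded hFs (fun n => ?_)
    rw [norm_mul, Real.norm_of_nonneg (hFpos n)]
    exact mul_le_of_le_one_right (hFpos n) (Real.abs_cos_le_one _)
  have hss : Summable (fun n : ℤ => deriv F n * Real.sin (2 * Real.pi * n * ξ)) := by
    refine Summable.of_norm_bounded (hFs.mul_left (α : ℝ)) (fun n => ?_)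
    rw [norm_mul]
    exact (mul_le_of_le_one_right (norm_nonneg _) (Real.abs_sin_le_one _)).trans (hdb n)
  have hds := dTerm_summable α hα hα4 s hs
  have htot : (1 - ξ) * (∑' n : ℤ, F n * Real.cos (2 * Real.pi * n * ξ))
          - (1 / (2 * Real.pi)) * ∑' n : ℤ, deriv F n * Real.sin (2 * Real.pi * n * ξ) =
      ∑' n : ℤ, ((1 - ξ) * (F n * Real.cos (2 * Real.pi * n * ξ)) -
        (1 / (2 * Real.pi)) * (deriv F n * Real.sin (2 * Real.pi * n * ξ)) -
        (1 - ξ) * dTerm α n s) := by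
    rw [((hcs.mul_left _).sub (hss.mul_left _)).tsum_sub (hds.mul_left _),
      (hcs.mul_left _).tsum_sub (hss.mul_left _), tsum_mul_left, tsum_mul_left, tsum_mul_left,
      hcrit, mul_zero, sub_zero]
  rw [htot]
  refine tsum_nonneg (fun n => ?_)
  rw [hdT]
  by_cases hn : n = 0
  · subst hn
    simp [hd0]
  have hn0 : (n : ℝ) ≠ 0 := by exact_mod_cast hn
  have hpi := Real.pi_pos
  have harg : 2 * Real.pi * n * ξ = n * (2 * Real.pi) - n * (2 * Real.pi * (1 - ξ)) := by ring
  have hFn : F n ≤ 1 / (1 + s ^ α) := by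
    rw [hF]
    apply one_div_le_one_div_of_le (by positivity)
    have h1 : (1 : ℝ) ≤ (n : ℝ) ^ α := by
      rw [← hα.pow_abs]
      exact one_le_pow₀ (by exact_mod_cast Int.one_le_abs hn)
    have h2 : 0 < s ^ α := by positivity
    nlinarith
  have hK : 3 ≤ α * (1 - F n) := by nlinarith
  have hterm := term_nonneg (α * (1 - F n)) (F n) n _ (hFpos n) hK hn0 (2 * Real.pi * (1 - ξ))
    (mul_nonneg (by positivity) (by linarith)) rfl
  have hdn : -(α * (1 - F n) * F n) / n = deriv F n := by
    rw [← hxd]; field_simp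
  rw [hdn] at hterm
  rw [harg, Real.cos_int_mul_two_pi_sub, Real.sin_int_mul_two_pi_sub]
  have e : ∀ C S : ℝ, (1 - ξ) * (F n * C) - 1 / (2 * Real.pi) * (deriv F n * -S) -
      (1 - ξ) * (F n + n * deriv F n) = (1 / (2 * Real.pi)) *
      (-(2 * Real.pi * (1 - ξ) * F n * (1 - C)) +
        deriv F n * (S - n * (2 * Real.pi * (1 - ξ)))) := by
    intro C S
    field_simp
    ring
  rw [e]
  exact mul_nonneg (by positivity) hterm
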